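/- arXiv:2502.19666 — 4 statements merged into one kernel-verified Lean document; each statement's English description precedes it below -/
import Mathlib

section
/- Let U be a separable complex Hilbert space, let a < b be real numbers, and let K : [a,b] → 𝓛(U) be a family of bounded linear operators on U such that for every h ∈ U the map t ↦ K(t)h is Lebesgue measurable. Then the set {t ∈ [a,b] : there exists c > 0 such that ‖K(t)h‖ ≥ c‖h‖ for all h ∈ U} (the set of t at which K(t) is bounded below) is Lebesgue measurable. -/
/-- For a strongly measurable family `K : [a,b] → 𝓛(U)` of bounded operators on a
separable complex Hilbert space `U`, the set of times `t ∈ [a,b]` at which `K t`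
is bounded below is (Lebesgue) measurable. -/
theorem stmt2 {U : Type*} [NormedAddCommGroup U] [InnerProductSpace ℂ U] [CompleteSpace U]
    [MeasurableSpace U] [BorelSpace U]
    [TopologicalSpace.SeparableSpace U]
    (a b : ℝ) (hab : a < b) (K : ℝ → (U →L[ℂ] U))
    (hmeas : ∀ h : U, Measurable fun t : ℝ => K t h) :
    MeasurableSet {t | t ∈ Set.Icc a b ∧ ∃ c > 0, ∀ h : U, c * ‖h‖ ≤ ‖K t h‖} := by
  -- By continuity of `K t`, the lower bound need only be tested on a countable dense sequence,
  -- and the constant may be taken of the form `1 / (n + 1)`.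
  have key : {t | t ∈ Set.Icc a b ∧ ∃ c > 0, ∀ h : U, c * ‖h‖ ≤ ‖K t h‖} =
      Set.Icc a b ∩ ⋃ n : ℕ, ⋂ k : ℕ,
        {t | 1 / ((n : ℝ) + 1) * ‖TopologicalSpace.denseSeq U k‖ ≤
          ‖K t (TopologicalSpace.denseSeq U k)‖} := by
    ext t
    simp only [Set.mem_setOf_eq, Set.mem_inter_iff, Set.mem_iUnion, Set.mem_iInter]
    refine and_congr_right fun _ => ⟨?_, ?_⟩
    · rintro ⟨c, hc, h⟩
      obtain ⟨n, hn⟩ := exists_nat_one_div_lt hc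
      exact ⟨n, fun k => (mul_le_mul_of_nonneg_right hn.le (norm_nonneg _)).trans (h _)⟩
    · rintro ⟨n, hn⟩
      refine ⟨1 / ((n : ℝ) + 1), Nat.one_div_pos_of_nat, fun h => ?_⟩
      refine (TopologicalSpace.denseRange_denseSeq U).induction_on
        (p := fun h => 1 / ((n : ℝ) + 1) * ‖h‖ ≤ ‖K t h‖) h ?_ hn
      exact isClosed_le (by fun_prop) (by fun_prop)
  rw [key]
  exact measurableSet_Icc.inter (MeasurableSet.iUnion fun n => MeasurableSet.iInter fun k =>
    measurableSet_le measurable_const (hmeas _).norm)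
end

section
/- Let U be a separable complex Hilbert space, let a < b be real numbers, and let K : [a,b] → 𝓛(U) be a family of bounded linear operators on U such that for every h ∈ U the map t ↦ K(t)h is Lebesgue measurable. Then the set E := {t ∈ [a,b] : K(t)h = 0 for some nonzero h ∈ U} is Lebesgue measurable, and there exists a Lebesgue measurable function f : [a,b] → U such that ‖f(t)‖ ≤ 1 for all t ∈ [a,b], K(t)f(t) = 0 for almost every t ∈ [a,b], and ‖f(t)‖ = 1 for almost every t ∈ E. -/
/-!
The kernel projections of a strongly measurable operator family are strongly measurable, and this
makes a general measurable selection theorem unnecessary.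

The norm `‖K t‖` is measurable in `t`: the inequalities `‖K t h‖ ≤ r ‖h‖` need only be tested on a
dense sequence of vectors `h`. The adjoint family `t ↦ (K t)† h` is weakly measurable, hence measurable
(`measurable_of_inner`: the functionals given by a dense sequence embed `U` in `ℕ → ℂ` as a
Borel subset, by the Lusin–Souslin theorem). Therefore
`T t = 1 - (1 + ‖K t‖²)⁻¹ (K t)† (K t)` is a strongly measurable family of contractions whose fixed
vectors are exactly `ker (K t)`, and von Neumann's mean ergodic theorem exhibits the orthogonal
projection `P t` onto `ker (K t)` as a strong pointwise limit of the averages of the powers of `T t`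
(`measurable_starProjection_ker`).

If `d` is a dense sequence in `U`, then `ker (K t) ≠ 0` if and only if `P t (d k) ≠ 0` for some `k`.
So `E` is measurable, and normalizing `P t (d k)` for the least such `k` gives the selection.
-/

open MeasureTheory

/-- Pettis' theorem in a separable Hilbert space: weak measurability implies Borel measurability. -/
theorem measurable_of_inner {α U : Type*} [MeasurableSpace α] [NormedAddCommGroup U]
    [InnerProductSpace ℂ U] [CompleteSpace U] [MeasurableSpace U] [BorelSpace U]
    [TopologicalSpace.SeparableSpace U] (g : α → U)
    (hg : ∀ u : U, Measurable fun t => inner ℂ u (g t)) : Measurable g := by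
  have : SecondCountableTopology U := UniformSpace.secondCountable_of_separable U
  let e : U → ℕ → ℂ := fun x n => inner ℂ (TopologicalSpace.denseSeq U n) x
  have he : Continuous e := by fun_prop
  have hinj : Function.Injective e := by
    intro x y hxy
    have h : (fun u => inner ℂ u x) = fun u => inner ℂ u y :=
      (TopologicalSpace.denseRange_denseSeq U).equalizer (by fun_prop) (by fun_prop) hxy
    exact ext_inner_left ℂ fun v => congrFun h v
  refine (he.measurableEmbedding hinj).measurable_comp_iff.1 ?_
  exact measurable_pi_iff.2 fun n => hg _

theorem measurable_opNorm {α U : Type*} [MeasurableSpace α] [NormedAddCommGroup U]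
    [InnerProductSpace ℂ U] [MeasurableSpace U] [BorelSpace U]
    [TopologicalSpace.SeparableSpace U] (K : α → (U →L[ℂ] U))
    (hK : ∀ h : U, Measurable fun t => K t h) : Measurable fun t => ‖K t‖ := by
  refine measurable_of_Iic fun r => ?_
  by_cases hr : 0 ≤ r
  · have : (fun t => ‖K t‖) ⁻¹' Set.Iic r = ⋂ n : ℕ,
        {t | ‖K t (TopologicalSpace.denseSeq U n)‖ ≤ r * ‖TopologicalSpace.denseSeq U n‖} := by
      ext t
      simp only [Set.mem_preimage, Set.mem_Iic, Set.mem_iInter, Set.mem_ofPred_eq]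
      refine ⟨fun h n => (K t).le_of_opNorm_le h _, fun h => ?_⟩
      refine (K t).opNorm_le_bound hr fun x => ?_
      refine (TopologicalSpace.denseRange_denseSeq U).induction_on x ?_ h
      exact isClosed_le (by fun_prop) (by fun_prop)
    rw [this]
    exact MeasurableSet.iInter fun n => measurableSet_le (hK _).norm measurable_const
  · have : (fun t => ‖K t‖) ⁻¹' Set.Iic r = ∅ := by
      ext t
      simp only [Set.mem_preimage, Set.mem_Iic, Set.mem_empty_iff_false, iff_false]
      intro h
      exact hr ((norm_nonneg _).trans h)
    rw [this]
    exact MeasurableSet.empty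

/-- A contraction whose fixed vectors are exactly the kernel of `A`. -/
noncomputable def kerContraction {U : Type*} [NormedAddCommGroup U] [InnerProductSpace ℂ U]
    [CompleteSpace U] (A : U →L[ℂ] U) : U →L[ℂ] U :=
  1 - (((1 + ‖A‖ ^ 2)⁻¹ : ℝ) : ℂ) • (ContinuousLinearMap.adjoint A ∘L A)

theorem kerContraction_apply {U : Type*} [NormedAddCommGroup U] [InnerProductSpace ℂ U]
    [CompleteSpace U] (A : U →L[ℂ] U) (x : U) : kerContraction A x =
      x - (((1 + ‖A‖ ^ 2)⁻¹ : ℝ) : ℂ) • ContinuousLinearMap.adjoint A (A x) := rfl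

theorem norm_kerContraction_le {U : Type*} [NormedAddCommGroup U] [InnerProductSpace ℂ U]
    [CompleteSpace U] (A : U →L[ℂ] U) : ‖kerContraction A‖ ≤ 1 := by
  refine ContinuousLinearMap.opNorm_le_bound _ zero_le_one fun x => ?_
  rw [one_mul, kerContraction_apply]
  set c : ℝ := (1 + ‖A‖ ^ 2)⁻¹ with hc
  have hpos : 0 < 1 + ‖A‖ ^ 2 := by positivity
  have hc0 : 0 < c := inv_pos.2 hpos
  have hc1 : c * (1 + ‖A‖ ^ 2) = 1 := inv_mul_cancel₀ hpos.ne'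
  have hin : RCLike.re (inner ℂ x ((c : ℂ) • ContinuousLinearMap.adjoint A (A x)))
      = c * ‖A x‖ ^ 2 := by
    rw [inner_smul_right, ContinuousLinearMap.adjoint_inner_right, inner_self_eq_norm_sq_to_K]
    norm_cast
    exact (Complex.re_ofReal_mul _ _).trans (congrArg _ (Complex.ofReal_re _))
  have hn : ‖(c : ℂ) • ContinuousLinearMap.adjoint A (A x)‖ ≤ c * (‖A‖ * ‖A x‖) := by
    rw [norm_smul, Complex.norm_real, Real.norm_of_nonneg hc0.le]
    gcongr
    simpa using (ContinuousLinearMap.adjoint A).le_opNorm (A x)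
  have hn2 : ‖(c : ℂ) • ContinuousLinearMap.adjoint A (A x)‖ ^ 2 ≤ c * ‖A x‖ ^ 2 := by
    calc _ ≤ (c * (‖A‖ * ‖A x‖)) ^ 2 := by gcongr
      _ = (c * ‖A‖ ^ 2) * (c * ‖A x‖ ^ 2) := by ring
      _ ≤ 1 * (c * ‖A x‖ ^ 2) := by
        gcongr
        nlinarith
      _ = _ := one_mul _
  refine le_of_sq_le_sq ?_ (norm_nonneg x)
  rw [@norm_sub_sq ℂ, hin]
  nlinarith [mul_nonneg hc0.le (sq_nonneg ‖A x‖)]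

theorem eqLocus_kerContraction {U : Type*} [NormedAddCommGroup U] [InnerProductSpace ℂ U]
    [CompleteSpace U] (A : U →L[ℂ] U) :
    (kerContraction A).eqLocus (1 : U →L[ℂ] U) = A.ker := by
  ext x
  have hpos : (1 + ‖A‖ ^ 2)⁻¹ ≠ 0 := by positivity
  have key : ContinuousLinearMap.adjoint A (A x) = 0 ↔ A x = 0 := by
    refine ⟨fun h => ?_, fun h => by simp [h]⟩
    rw [← inner_self_eq_zero (𝕜 := ℂ), ← ContinuousLinearMap.adjoint_inner_left, h,
      inner_zero_left]
  change kerContraction A x = x ↔ A x = 0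
  rw [kerContraction_apply, sub_eq_self, smul_eq_zero, key]
  simp only [Complex.ofReal_eq_zero, hpos, false_or]

/-- The orthogonal projections onto the kernels of a strongly measurable family of operators form a
strongly measurable family, by the mean ergodic theorem for `kerContraction`. -/
theorem measurable_starProjection_ker {α U : Type*} [MeasurableSpace α] [NormedAddCommGroup U]
    [InnerProductSpace ℂ U] [CompleteSpace U] [MeasurableSpace U] [BorelSpace U]
    [TopologicalSpace.SeparableSpace U] (K : α → (U →L[ℂ] U))
    (hK : ∀ h : U, Measurable fun t => K t h) (h : U) :
    Measurable fun t => (K t).ker.starProjection h := by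
  have : SecondCountableTopology U := UniformSpace.secondCountable_of_separable U
  -- The Carathéodory property: a strongly measurable family acts on measurable functions.
  have comp : ∀ L : α → (U →L[ℂ] U), (∀ u, Measurable fun t => L t u) →
      ∀ g : α → U, Measurable g → Measurable fun t => L t (g t) := fun L hL g hg =>
    (measurable_uncurry_of_continuous_of_measurable (u := fun u t => L t u)
      (fun t => (L t).continuous) hL).comp (hg.prodMk measurable_id)
  have hadj : ∀ u, Measurable fun t => ContinuousLinearMap.adjoint (K t) u := fun u => by
    refine measurable_of_inner _ fun v => ?_
    simp only [ContinuousLinearMap.adjoint_inner_right]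
    exact (hK v).inner measurable_const
  have hT : ∀ u, Measurable fun t => kerContraction (K t) u := fun u => by
    simp only [kerContraction_apply]
    have hn := measurable_opNorm K hK
    have hc : Measurable fun t => (((1 + ‖K t‖ ^ 2)⁻¹ : ℝ) : ℂ) := by fun_prop
    exact measurable_const.sub (hc.smul (comp _ hadj _ (hK u)))
  have hiter : ∀ n : ℕ, Measurable fun t => (kerContraction (K t))^[n] h := fun n => by
    induction n with
    | zero => exact measurable_const
    | succ n ih =>
      simp only [Function.iterate_succ_apply']
      exact comp _ hT _ ih
  refine measurable_of_tendsto_metrizable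
    (f := fun N t => birkhoffAverage ℂ (kerContraction (K t)) id N h) (fun N => ?_) ?_
  · simp only [birkhoffAverage, birkhoffSum, id]
    exact (Finset.measurable_sum _ fun n _ => hiter n).const_smul _
  · refine tendsto_pi_nhds.2 fun t => ?_
    have := (kerContraction (K t)).tendsto_birkhoffAverage_orthogonalProjection
      (norm_kerContraction_le _) h
    have hP : ((kerContraction (K t)).eqLocus (1 : U →L[ℂ] U)).starProjection h =
        (K t).ker.starProjection h := by
      congr 2
      exact eqLocus_kerContraction (K t)
    rw [← hP]
    exact this

/-- Measurable selection of a unit kernel vector: if `K : [a,b] → 𝓛(U)` is a strongly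
measurable family of bounded operators on a separable complex Hilbert space, then the
set `E` of times where `K t` has nontrivial kernel is measurable, and there is a
measurable `f : [a,b] → U` with `‖f t‖ ≤ 1`, `K t (f t) = 0` a.e., and `‖f t‖ = 1`
for a.e. `t ∈ E`. -/
theorem stmt3 {U : Type*} [NormedAddCommGroup U] [InnerProductSpace ℂ U] [CompleteSpace U]
    [MeasurableSpace U] [BorelSpace U]
    [TopologicalSpace.SeparableSpace U]
    (a b : ℝ) (hab : a < b) (K : ℝ → (U →L[ℂ] U))
    (hmeas : ∀ h : U, Measurable fun t : ℝ => K t h) :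
    MeasurableSet {t | t ∈ Set.Icc a b ∧ ∃ h : U, h ≠ 0 ∧ K t h = 0} ∧
      ∃ f : ℝ → U, Measurable f ∧ (∀ t ∈ Set.Icc a b, ‖f t‖ ≤ 1) ∧
        (∀ᵐ t ∂(volume.restrict (Set.Icc a b)), K t (f t) = 0) ∧
        (∀ᵐ t ∂(volume.restrict (Set.Icc a b)),
          (∃ h : U, h ≠ 0 ∧ K t h = 0) → ‖f t‖ = 1) := by
  classical
  have : SecondCountableTopology U := UniformSpace.secondCountable_of_separable U
  let v : ℕ → ℝ → U := fun n t => (K t).ker.starProjection (TopologicalSpace.denseSeq U n)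
  have hv : ∀ n, Measurable (v n) := fun n => measurable_starProjection_ker K hmeas _
  have hKv : ∀ n t, K t (v n t) = 0 := fun n t =>
    Submodule.starProjection_apply_mem (K t).ker _
  have hne : ∀ n, MeasurableSet {t | v n t ≠ 0} := fun n =>
    (hv n) (measurableSet_singleton (0 : U)).compl
  have hE : ∀ t, (∃ h : U, h ≠ 0 ∧ K t h = 0) ↔ ∃ n, v n t ≠ 0 := by
    intro t
    refine ⟨fun ⟨h, h0, hh⟩ => ?_, fun ⟨n, hn⟩ => ⟨_, hn, hKv n t⟩⟩
    by_contra! H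
    refine h0 ?_
    have hz : (K t).ker.starProjection h = 0 :=
      (TopologicalSpace.denseRange_denseSeq U).induction_on
        (p := fun x => (K t).ker.starProjection x = 0) h
        (isClosed_eq (by fun_prop) continuous_const) H
    rwa [Submodule.starProjection_eq_self_iff.2 (show h ∈ (K t).ker from hh)] at hz
  have hEm : MeasurableSet {t | ∃ n, v n t ≠ 0} := by
    have : {t | ∃ n, v n t ≠ 0} = ⋃ n, {t | v n t ≠ 0} := by ext; simp
    rw [this]
    exact MeasurableSet.iUnion hne
  -- Off `E` every index is admissible, so that a least admissible index always exists; the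
  -- selected vector is then `‖0‖⁻¹ • 0 = 0`.
  have hex : ∀ t, ∃ n, v n t ≠ 0 ∨ ¬ ∃ m, v m t ≠ 0 := fun t => by
    by_cases h : ∃ m, v m t ≠ 0
    · exact h.imp fun n hn => Or.inl hn
    · exact ⟨0, Or.inr h⟩
  let g : ℝ → U := fun t => v (Nat.find (hex t)) t
  have hg : Measurable g :=
    Measurable.find (p := fun n t => v n t ≠ 0 ∨ ¬ ∃ m, v m t ≠ 0) hv
      (fun n => (hne n).union hEm.compl) hex
  have hf1 : ∀ t, g t ≠ 0 → ‖((‖g t‖⁻¹ : ℝ) : ℂ) • g t‖ = 1 := fun t ht => by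
    rw [norm_smul, Complex.norm_real, norm_inv, norm_norm,
      inv_mul_cancel₀ (norm_ne_zero_iff.2 ht)]
  refine ⟨?_, fun t => ((‖g t‖⁻¹ : ℝ) : ℂ) • g t, ?_, fun t _ => ?_, ?_, ?_⟩
  · simp only [hE]
    exact measurableSet_Icc.inter hEm
  · have hc : Measurable fun t => ((‖g t‖⁻¹ : ℝ) : ℂ) := by fun_prop
    exact hc.smul hg
  · by_cases h : g t = 0
    · simp [h]
    · exact (hf1 t h).le
  · refine Filter.Eventually.of_forall fun t => ?_
    simp only [map_smul]
    rw [show K t (g t) = 0 from hKv _ t, smul_zero]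
  · refine Filter.Eventually.of_forall fun t ht => hf1 t ?_
    exact (Nat.find_spec (hex t)).resolve_right fun h => h ((hE t).1 ht)
end

section
/- Let U be a separable complex Hilbert space, let a < b be real numbers, and let K : [a,b] → 𝓛(U) be a family of bounded linear operators on U such that for every h ∈ U the map t ↦ K(t)h is Lebesgue measurable. Then the set Ẽ := {t ∈ [a,b] : the range of K(t) is not dense in U} is Lebesgue measurable, and there exists a Lebesgue measurable function f̃ : [a,b] → U such that ‖f̃(t)‖ ≤ 1 for all t ∈ [a,b], ⟨K(t)h, f̃(t)⟩ = 0 for every h ∈ U and almost every t ∈ [a,b], and ‖f̃(t)‖ = 1 for almost every t ∈ Ẽ. -/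
/-!
Write `P t` for the orthogonal projection onto the orthogonal complement of the range of `K t`.
For a fixed vector `e`, `‖P t e‖` is the distance from `e` to the range of `K t`, hence the infimum
of `‖K t h - e‖` over a countable dense set of vectors `h`, so it is a measurable function of `t`
(`measurable_norm_proj`). By polarization `‖P t e - y‖` is a combination of such norms, so the
distance from `P t e` to every fixed point is measurable; as balls form a basis of the second
countable space `U`, `t ↦ P t e` is itself measurable (`measurable_proj`).

The range of `K t` fails to be dense exactly when `P t e ≠ 0` for some `e` in a countable dense
set, which gives measurability of the exceptional set. The selection is the normalization of
`P t e` for the first such `e`, and zero when there is none; no abstract selection theorem is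
needed, and all the properties hold at every `t`.
-/

open MeasureTheory
open scoped ComplexInnerProductSpace

/-- The orthogonal projection onto the orthogonal complement of the range of `A`. -/
noncomputable def coProj {U : Type*} [NormedAddCommGroup U] [InnerProductSpace ℂ U]
    [CompleteSpace U] (A : U →L[ℂ] U) : U →L[ℂ] U :=
  (LinearMap.range (A : U →ₗ[ℂ] U))ᗮ.starProjection

/-- Into a separable normed group, measurability may be tested on distances to fixed points. -/
lemma measurable_of_norm_sub {U : Type*} [NormedAddCommGroup U] [MeasurableSpace U]
    [BorelSpace U] [TopologicalSpace.SeparableSpace U] {α : Type*} [MeasurableSpace α]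
    {f : α → U} (hf : ∀ y, Measurable fun t => ‖f t - y‖) : Measurable f := by
  have : SecondCountableTopology U := UniformSpace.secondCountable_of_separable U
  have hb : TopologicalSpace.IsTopologicalBasis {s : Set U | ∃ y r, s = Metric.ball y r} := by
    refine TopologicalSpace.isTopologicalBasis_of_isOpen_of_nhds ?_ ?_
    · rintro _ ⟨y, r, rfl⟩
      exact Metric.isOpen_ball
    · intro x s hx hs
      obtain ⟨ε, hε, h⟩ := Metric.isOpen_iff.1 hs x hx
      exact ⟨_, ⟨x, ε, rfl⟩, Metric.mem_ball_self hε, h⟩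
  rw [‹BorelSpace U›.measurable_eq, hb.borel_eq_generateFrom]
  refine measurable_generateFrom ?_
  rintro _ ⟨y, r, rfl⟩
  have : f ⁻¹' Metric.ball y r = {t | ‖f t - y‖ < r} := by
    ext t
    simp [dist_eq_norm]
  rw [this]
  exact measurableSet_lt (hf y) measurable_const

section

variable {U : Type*} [NormedAddCommGroup U] [InnerProductSpace ℂ U] [CompleteSpace U]

lemma inner_coProj (A : U →L[ℂ] U) (e h : U) : ⟪A h, coProj A e⟫ = 0 :=
  ((LinearMap.range (A : U →ₗ[ℂ] U)).mem_orthogonal _).1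
    (Submodule.starProjection_apply_mem _ e) (A h) ⟨h, rfl⟩

lemma norm_coProj_eq (A : U →L[ℂ] U) {d : ℕ → U} (hd : DenseRange d) (e : U) :
    ‖coProj A e‖ = ⨅ n, ‖A (d n) - e‖ := by
  have hbdd : BddBelow (Set.range fun n => ‖A (d n) - e‖) :=
    ⟨0, Set.forall_mem_range.2 fun _ => norm_nonneg _⟩
  apply le_antisymm
  · refine le_ciInf fun n => ?_
    have h0 : coProj A (A (d n)) = 0 :=
      Submodule.starProjection_orthogonal_apply_eq_zero ⟨d n, rfl⟩
    calc ‖coProj A e‖ = ‖coProj A (A (d n) - e)‖ := by rw [map_sub, h0, zero_sub, norm_neg]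
      _ ≤ ‖A (d n) - e‖ := Submodule.norm_starProjection_apply_le _ _
  · refine le_of_forall_pos_lt_add fun ε hε => ?_
    have hmem : e - coProj A e ∈ closure (Set.range fun n => A (d n)) := by
      have h1 : e - coProj A e ∈ (LinearMap.range (A : U →ₗ[ℂ] U))ᗮᗮ :=
        Submodule.sub_starProjection_mem_orthogonal _
      rw [Submodule.orthogonal_orthogonal_eq_closure] at h1
      have h2 : e - coProj A e ∈ closure (Set.range A) := h1
      refine closure_minimal ?_ isClosed_closure h2
      exact A.continuous.range_subset_closure_image_dense hd |>.trans
        (closure_mono (by rw [← Set.range_comp]; rfl))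
    obtain ⟨_, ⟨n, rfl⟩, hn⟩ := Metric.mem_closure_iff.1 hmem ε hε
    refine (ciInf_le hbdd n).trans_lt ?_
    rw [dist_comm, dist_eq_norm] at hn
    calc ‖A (d n) - e‖ = ‖(A (d n) - (e - coProj A e)) - coProj A e‖ := by congr 1; abel
      _ ≤ ‖A (d n) - (e - coProj A e)‖ + ‖coProj A e‖ := norm_sub_le _ _
      _ < ‖coProj A e‖ + ε := by linarith

/-- Polarization: distances from `coProj A e` are determined by the norms of `coProj A` alone. -/
lemma norm_coProj_sub_sq (A : U →L[ℂ] U) (e y : U) :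
    ‖coProj A e - y‖ ^ 2 = ‖coProj A e‖ ^ 2
      - (‖coProj A (e + y)‖ ^ 2 - ‖coProj A (e - y)‖ ^ 2) / 2 + ‖y‖ ^ 2 := by
  have hin : ⟪coProj A e, coProj A y⟫ = ⟪coProj A e, y⟫ := by
    have h := (LinearMap.range (A : U →ₗ[ℂ] U))ᗮ.starProjection_inner_eq_zero y (coProj A e)
      (Submodule.starProjection_apply_mem _ e)
    have h' : ⟪coProj A e, y - coProj A y⟫ = 0 := inner_eq_zero_symm.1 h
    rw [inner_sub_right, sub_eq_zero] at h'
    exact h'.symm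
  rw [map_add, map_sub, @norm_sub_sq ℂ, @norm_sub_sq ℂ, @norm_add_sq ℂ, hin]
  ring

lemma denseRange_iff_coProj (A : U →L[ℂ] U) {d : ℕ → U} (hd : DenseRange d) :
    DenseRange A ↔ ∀ n, coProj A (d n) = 0 := by
  have h1 : DenseRange A ↔ (LinearMap.range (A : U →ₗ[ℂ] U))ᗮ = ⊥ := by
    rw [← Submodule.topologicalClosure_eq_top_iff, ← Submodule.dense_iff_topologicalClosure_eq_top]
    rfl
  rw [h1]
  constructor
  · intro h n
    have hm : coProj A (d n) ∈ (LinearMap.range (A : U →ₗ[ℂ] U))ᗮ :=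
      Submodule.starProjection_apply_mem _ _
    rwa [h, Submodule.mem_bot] at hm
  · intro h
    have h0 : (coProj A : U → U) = fun _ => 0 :=
      hd.equalizer (coProj A).continuous continuous_const (funext h)
    rw [Submodule.eq_bot_iff]
    intro x hx
    rw [← Submodule.starProjection_eq_self_iff] at hx
    exact hx.symm.trans (congrFun h0 x)

variable [MeasurableSpace U] [BorelSpace U] [TopologicalSpace.SeparableSpace U]

lemma measurable_norm_proj {K : ℝ → (U →L[ℂ] U)} (hmeas : ∀ h : U, Measurable fun t => K t h)
    (e : U) : Measurable fun t => ‖coProj (K t) e‖ := by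
  have : SecondCountableTopology U := UniformSpace.secondCountable_of_separable U
  simp_rw [norm_coProj_eq _ (TopologicalSpace.denseRange_denseSeq U)]
  exact Measurable.iInf fun n => ((hmeas _).sub_const e).norm

lemma measurable_proj {K : ℝ → (U →L[ℂ] U)} (hmeas : ∀ h : U, Measurable fun t => K t h)
    (e : U) : Measurable fun t => coProj (K t) e := by
  refine measurable_of_norm_sub fun y => ?_
  have h : (fun t => ‖coProj (K t) e - y‖) = fun t => √(‖coProj (K t) e‖ ^ 2
      - (‖coProj (K t) (e + y)‖ ^ 2 - ‖coProj (K t) (e - y)‖ ^ 2) / 2 + ‖y‖ ^ 2) := by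
    funext t
    rw [← norm_coProj_sub_sq, Real.sqrt_sq (norm_nonneg _)]
  rw [h]
  have hn := measurable_norm_proj hmeas
  exact ((((hn e).pow_const 2).sub ((((hn _).pow_const 2).sub ((hn _).pow_const 2)).div_const
    2)).add_const _).sqrt

end

/-- Measurable selection of a unit vector orthogonal to the range: if
`K : [a,b] → 𝓛(U)` is a strongly measurable family of bounded operators on a separable
complex Hilbert space, then the set `Ẽ` of times where `K t` does not have dense range
is measurable, and there is a measurable `f̃ : [a,b] → U` with `‖f̃ t‖ ≤ 1`,
`⟪K t h, f̃ t⟫ = 0` for all `h` and a.e. `t`, and `‖f̃ t‖ = 1` for a.e. `t ∈ Ẽ`. -/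
theorem stmt4 {U : Type*} [NormedAddCommGroup U] [InnerProductSpace ℂ U] [CompleteSpace U]
    [MeasurableSpace U] [BorelSpace U]
    [TopologicalSpace.SeparableSpace U]
    (a b : ℝ) (hab : a < b) (K : ℝ → (U →L[ℂ] U))
    (hmeas : ∀ h : U, Measurable fun t : ℝ => K t h) :
    MeasurableSet {t | t ∈ Set.Icc a b ∧ ¬ DenseRange (K t)} ∧
      ∃ f : ℝ → U, Measurable f ∧ (∀ t ∈ Set.Icc a b, ‖f t‖ ≤ 1) ∧
        (∀ᵐ t ∂(volume.restrict (Set.Icc a b)), ∀ h : U, ⟪K t h, f t⟫ = 0) ∧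
        (∀ᵐ t ∂(volume.restrict (Set.Icc a b)),
          ¬ DenseRange (K t) → ‖f t‖ = 1) := by
  classical
  have : SecondCountableTopology U := UniformSpace.secondCountable_of_separable U
  set d : ℕ → U := TopologicalSpace.denseSeq U
  have hd : DenseRange d := TopologicalSpace.denseRange_denseSeq U
  have hP := measurable_proj hmeas
  have hzero : ∀ n, MeasurableSet {t | coProj (K t) (d n) = 0} := fun n =>
    hP (d n) (measurableSet_singleton 0)
  have hdense : MeasurableSet {t | DenseRange (K t)} := by
    simp_rw [denseRange_iff_coProj _ hd, Set.ofPred_forall]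
    exact MeasurableSet.iInter hzero
  refine ⟨measurableSet_Icc.inter hdense.compl, ?_⟩
  -- The second alternative makes the search for an index total.
  let p : ℕ → ℝ → Prop := fun n t => coProj (K t) (d n) ≠ 0 ∨ DenseRange (K t)
  have hp : ∀ n, MeasurableSet {t | p n t} := fun n => (hzero n).compl.union hdense
  have hex : ∀ t, ∃ n, p n t := by
    intro t
    by_cases h : DenseRange (K t)
    · exact ⟨0, Or.inr h⟩
    · obtain ⟨n, hn⟩ := not_forall.1 (mt (denseRange_iff_coProj (K t) hd).2 h)
      exact ⟨n, Or.inl hn⟩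
  -- Since `0⁻¹ = 0`, the normalization of the zero vector is zero.
  let g : ℕ → ℝ → U := fun n t => ((‖coProj (K t) (d n)‖⁻¹ : ℝ) : ℂ) • coProj (K t) (d n)
  have hg : ∀ n, Measurable (g n) := fun n =>
    (Complex.measurable_ofReal.comp (hP (d n)).norm.inv).smul (hP (d n))
  have hnorm : ∀ n t, ‖g n t‖ = ‖coProj (K t) (d n)‖⁻¹ * ‖coProj (K t) (d n)‖ := by
    intro n t
    simp [g, norm_smul]
  refine ⟨fun t => g (Nat.find (hex t)) t, Measurable.find hg hp hex, fun t _ => ?_, ?_, ?_⟩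
  · rw [hnorm]
    exact inv_mul_le_one
  · refine Filter.Eventually.of_forall fun t h => ?_
    simp only [g]
    rw [inner_smul_right, inner_coProj, mul_zero]
  · refine Filter.Eventually.of_forall fun t ht => ?_
    have h : coProj (K t) (d (Nat.find (hex t))) ≠ 0 := (Nat.find_spec (hex t)).resolve_right ht
    rw [hnorm, inv_mul_cancel₀ (norm_ne_zero_iff.2 h)]
end

section
/- Let U be a separable complex Hilbert space, let a < b be real numbers, and let N : [a,b] → 𝓛(U) be such that for every u ∈ U the map t ↦ N(t)u is Bochner integrable on [a,b]. Suppose that for every u ∈ U, every τ ∈ [a,b) and every ε > 0 with τ + ε ≤ b one has ∫_τ^{τ+ε} Re⟨N(t)u, u⟩ dt ≥ 0. Then for almost every t ∈ [a,b] it holds that Re⟨N(t)u, u⟩ ≥ 0 for all u ∈ U. -/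
open MeasureTheory
open scoped ComplexInnerProductSpace

/-! For a fixed `u`, the averages of `t ↦ Re ⟪N t u, u⟫` over the intervals `[t - r, t + r]`
are nonnegative and converge to the value at `t` for almost every `t`, by the Lebesgue
differentiation theorem (`ae_nonneg_of_setIntegral_Icc_nonneg`). Intersecting the resulting
full-measure sets over a countable dense set of `u` gives one exceptional null set, and for `t`
outside it the inequality extends to every `u` because `u ↦ Re ⟪N t u, u⟫` is continuous. -/

open Filter Topology in
lemma ae_nonneg_of_setIntegral_Icc_nonneg {a b : ℝ} {f : ℝ → ℝ}
    (hf : IntegrableOn f (Set.Icc a b))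
    (hpos : ∀ τ ∈ Set.Ico a b, ∀ ε > (0 : ℝ), τ + ε ≤ b → 0 ≤ ∫ t in Set.Icc τ (τ + ε), f t) :
    ∀ᵐ t ∂(volume.restrict (Set.Icc a b)), 0 ≤ f t := by
  -- The differentiation theorem needs a function on all of `ℝ`, and endpoints are negligible.
  have hg : Integrable ((Set.Icc a b).indicator f) := hf.integrable_indicator measurableSet_Icc
  rw [← restrict_Ioo_eq_restrict_Icc, ae_restrict_iff' measurableSet_Ioo]
  filter_upwards [IsUnifLocDoublingMeasure.ae_tendsto_average (μ := (volume : Measure ℝ))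
    hg.locallyIntegrable 1] with x hx hxab
  have hlim := hx (l := 𝓝[>] (0 : ℝ)) (fun _ => x) id tendsto_id (by
    filter_upwards [self_mem_nhdsWithin] with r hr
    simpa using (Set.mem_Ioi.1 hr).le)
  rw [Set.indicator_of_mem (Set.Ioo_subset_Icc_self hxab)] at hlim
  refine ge_of_tendsto hlim ?_
  have hδ : 0 < min (x - a) (b - x) :=
    lt_min (sub_pos.2 hxab.1) (sub_pos.2 hxab.2)
  filter_upwards [Ioo_mem_nhdsGT hδ] with r hr
  have h1 : r < x - a := hr.2.trans_le (min_le_left _ _)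
  have h2 : r < b - x := hr.2.trans_le (min_le_right _ _)
  have h0 : 0 < r := hr.1
  rw [setAverage_eq, id, Real.closedBall_eq_Icc]
  refine smul_nonneg (by positivity) ?_
  have hsub : Set.Icc (x - r) (x + r) ⊆ Set.Icc a b :=
    Set.Icc_subset_Icc (by linarith) (by linarith)
  rw [setIntegral_congr_fun measurableSet_Icc
    (fun t ht => Set.indicator_of_mem (hsub ht) f)]
  have := hpos (x - r) ⟨by linarith, by linarith⟩ (2 * r) (by linarith) (by linarith)
  rwa [show x - r + 2 * r = x + r by ring] at this

/-- Lebesgue-differentiation conclusion of the spike-variation argument: if every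
short-time average of `Re⟪N t u, u⟫` is nonnegative, then `Re⟪N t u, u⟫ ≥ 0` for all
`u` at almost every `t ∈ [a,b]`. -/
theorem stmt6 {U : Type*} [NormedAddCommGroup U] [InnerProductSpace ℂ U] [CompleteSpace U]
    [MeasurableSpace U] [BorelSpace U]
    [TopologicalSpace.SeparableSpace U]
    (a b : ℝ) (hab : a < b) (N : ℝ → (U →L[ℂ] U))
    (hint : ∀ u : U, IntegrableOn (fun t : ℝ => N t u) (Set.Icc a b))
    (hpos : ∀ u : U, ∀ τ ∈ Set.Ico a b, ∀ ε > (0 : ℝ), τ + ε ≤ b →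
      0 ≤ ∫ t in Set.Icc τ (τ + ε), (⟪N t u, u⟫).re) :
    ∀ᵐ t ∂(volume.restrict (Set.Icc a b)), ∀ u : U, 0 ≤ (⟪N t u, u⟫).re := by
  have hdense : ∀ᵐ t ∂(volume.restrict (Set.Icc a b)),
      ∀ n : ℕ, 0 ≤ (⟪N t (TopologicalSpace.denseSeq U n), TopologicalSpace.denseSeq U n⟫).re :=
    ae_all_iff.2 fun n =>
      ae_nonneg_of_setIntegral_Icc_nonneg ((hint _).inner_const (𝕜 := ℂ) _).re (hpos _)
  filter_upwards [hdense] with t ht u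
  have hcont : Continuous fun u : U => (⟪N t u, u⟫).re :=
    Complex.continuous_re.comp ((N t).continuous.inner continuous_id)
  refine (TopologicalSpace.denseRange_denseSeq U).induction_on u
    (isClosed_le continuous_const hcont) ht
end
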